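/- arXiv:2303.05395 — 5 statements merged into one kernel-verified Lean document; each statement's English description precedes it below -/
import Mathlib

section
/- For every integer n ≥ 1, the central binomial coefficient satisfies 4^n / √(π(n + 1/2)) ≤ C(2n, n) ≤ 4^n / √(π n), where C(2n,n) denotes the binomial coefficient (2n choose n) and π is the real number pi. -/
open Real

/-!
Wallis' partial product `W n` is `16 ^ n / ((2 * n + 1) * C(2n,n) ^ 2)`, so `C(2n,n)` is exactly
`4 ^ n / √((2 * n + 1) * W n)`. Comparing the integrals of consecutive powers of the sine gives
`(2 * n + 1) / (2 * n + 2) * (π / 2) ≤ W n ≤ π / 2`, hence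
`π * n ≤ (2 * n + 1) * W n ≤ π * (n + 1 / 2)`.
-/

lemma two_mul_add_one_mul_W_mul_centralBinom_sq (n : ℕ) :
    (2 * n + 1) * Wallis.W n * (n.centralBinom : ℝ) ^ 2 = (4 ^ n) ^ 2 := by
  have centralBinom_eq :
      (n.centralBinom : ℝ) = (2 * n).factorial / (n.factorial * n.factorial) := by
    rw [Nat.centralBinom_eq_two_mul_choose, two_mul, Nat.cast_add_choose]
  have four_pow_sq : ((4 : ℝ) ^ n) ^ 2 = 2 ^ (4 * n) := by
    rw [pow_right_comm, pow_mul]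
    norm_num
  rw [Wallis.W_eq_factorial_ratio, centralBinom_eq, four_pow_sq]
  field_simp

lemma centralBinom_eq_four_pow_div_sqrt (n : ℕ) :
    (n.centralBinom : ℝ) = 4 ^ n / √((2 * n + 1) * Wallis.W n) := by
  have radicand_pos : 0 < (2 * n + 1) * Wallis.W n := mul_pos (by positivity) (Wallis.W_pos n)
  rw [eq_div_iff (sqrt_pos.2 radicand_pos).ne', mul_comm,
    ← sq_eq_sq₀ (by positivity) (by positivity), mul_pow, sq_sqrt radicand_pos.le,
    two_mul_add_one_mul_W_mul_centralBinom_sq]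

lemma two_mul_add_one_mul_W_le (n : ℕ) :
    (2 * n + 1) * Wallis.W n ≤ π * (n + 1 / 2) :=
  calc
    (2 * n + 1) * Wallis.W n ≤ (2 * n + 1) * (π / 2) := by gcongr; exact Wallis.W_le n
    _ = π * (n + 1 / 2) := by ring

lemma pi_mul_le_two_mul_add_one_mul_W (n : ℕ) : π * n ≤ (2 * n + 1) * Wallis.W n :=
  calc
    π * n ≤ π * (n + 1 / (4 * (n + 1))) := by
      gcongr
      exact le_add_of_nonneg_right (by positivity)
    _ = (2 * n + 1) * ((2 * n + 1) / (2 * n + 2) * (π / 2)) := by field_simp; ring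
    _ ≤ (2 * n + 1) * Wallis.W n := by gcongr; exact Wallis.le_W n

/-- For every integer `n ≥ 1`,
`4^n / √(π(n+1/2)) ≤ C(2n,n) ≤ 4^n / √(π n)`. -/
theorem stmt_3 (n : ℕ) (hn : n ≥ 1) :
    (4 : ℝ) ^ n / Real.sqrt (π * ((n : ℝ) + 1 / 2)) ≤ (Nat.choose (2 * n) n : ℝ) ∧
    (Nat.choose (2 * n) n : ℝ) ≤ (4 : ℝ) ^ n / Real.sqrt (π * n) := by
  have W_pos : 0 < Wallis.W n := Wallis.W_pos n
  rw [← Nat.centralBinom_eq_two_mul_choose, centralBinom_eq_four_pow_div_sqrt]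
  constructor
  · gcongr 4 ^ n / √?_
    exact two_mul_add_one_mul_W_le n
  · gcongr 4 ^ n / √?_
    exact pi_mul_le_two_mul_add_one_mul_W n
end

section
/- Let a, b, n be integers with a > b ≥ n ≥ 2. Then k(a, n) > k(b, n), where k(m,n) := (∑_{i=1}^{n} log(1 + m/i)) / log(m+n) and log denotes the natural logarithm. -/
/-- `k(m,n) = (∑_{i=1}^n log(1 + m/i)) / log(m+n)`. -/
noncomputable def kfun (m n : ℕ) : ℝ :=
  (∑ i ∈ Finset.Icc 1 n, Real.log (1 + (m : ℝ) / (i : ℝ))) / Real.log ((m : ℝ) + n)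

/-!
Every summand `log (1 + x / d) / log (x + c)` with `1 ≤ d ≤ c` is already strictly increasing in
`x`: its complement to `1` is `(log (x + c) - log (1 + x / d)) / log (x + c)`, a positive
nonincreasing numerator over a positive strictly increasing denominator.
-/

open Real Set

section LogRatio

variable {c d : ℝ}

theorem antitoneOn_log_add_sub_log_one_add_div (hd : 0 < d) (hdc : d ≤ c) :
    AntitoneOn (fun x : ℝ => log (x + c) - log (1 + x / d)) (Ioi (-d)) := by
  intro x hx y hy hxy
  have hxd : 0 < x + d := neg_lt_iff_pos_add.mp hx
  have hyd : 0 < y + d := neg_lt_iff_pos_add.mp hy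
  have log_sub_eq {z : ℝ} (hz : 0 < z + d) :
      log (z + c) - log (1 + z / d) = log (d * (1 + (c - d) / (z + d))) := by
    rw [one_add_div hd.ne', add_comm d, ← log_div (by linarith) (by positivity)]
    congr 1
    field_simp
    ring
  simp only [log_sub_eq hxd, log_sub_eq hyd]
  gcongr

theorem log_one_add_div_lt_log_add {x : ℝ} (hd : 1 ≤ d) (hc : 1 < c) (hxd : -d < x)
    (hxc : 1 - c < x) : log (1 + x / d) < log (x + c) := by
  have hd₀ : 0 < d := by linarith
  rw [one_add_div hd₀.ne']
  refine log_lt_log (div_pos (by linarith) hd₀) ((div_lt_iff₀ hd₀).mpr ?_)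
  have gap_eq : (x + c) * d - (d + x) = (d - 1) * (x + c - 1) + (c - 1) := by ring
  have gap_nonneg : 0 ≤ (d - 1) * (x + c - 1) := mul_nonneg (by linarith) (by linarith)
  exact sub_pos.mp (gap_eq ▸ by linarith)

theorem strictMonoOn_log_one_add_div_div_log_add (hd : 1 ≤ d) (hdc : d ≤ c) (hc : 1 < c) :
    StrictMonoOn (fun x : ℝ => log (1 + x / d) / log (x + c)) (Ioi (max (-d) (1 - c))) := by
  intro x hx y hy hxy
  obtain ⟨hxd, hxc⟩ := max_lt_iff.mp (mem_Ioi.mp hx)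
  obtain ⟨hyd, _⟩ := max_lt_iff.mp (mem_Ioi.mp hy)
  have hx_log : 0 < log (x + c) := log_pos (by linarith)
  have hlog : log (x + c) < log (y + c) := log_lt_log (by linarith) (by linarith)
  have complement_lt : (log (y + c) - log (1 + y / d)) / log (y + c) <
      (log (x + c) - log (1 + x / d)) / log (x + c) :=
    div_lt_div₀' (antitoneOn_log_add_sub_log_one_add_div (by linarith) hdc hxd hyd hxy.le) hlog
      (sub_pos.mpr (log_one_add_div_lt_log_add hd hc hxd hxc)) hx_log
  rw [sub_div, sub_div, div_self hx_log.ne', div_self (hx_log.trans hlog).ne'] at complement_lt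
  exact (sub_lt_sub_iff_left 1).mp complement_lt

end LogRatio

theorem stmt_5_general {n : ℕ} (hn : 2 ≤ n) :
    StrictMonoOn (fun x : ℝ => (∑ i ∈ Finset.Icc 1 n, log (1 + x / i)) / log (x + n))
      (Ioi (-1)) := by
  intro x hx y hy hxy
  simp only [Finset.sum_div]
  refine Finset.sum_lt_sum_of_nonempty (Finset.nonempty_Icc.mpr (by lia)) fun i hi => ?_
  obtain ⟨one_le_i, i_le_n⟩ := Finset.mem_Icc.mp hi
  have hi₁ : (1 : ℝ) ≤ i := mod_cast one_le_i
  have hn₂ : (2 : ℝ) ≤ n := mod_cast hn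
  have domain_subset : Ioi (-1) ⊆ Ioi (max (-(i : ℝ)) (1 - n)) :=
    Ioi_subset_Ioi (max_le (by linarith) (by linarith))
  exact strictMonoOn_log_one_add_div_div_log_add hi₁ (mod_cast i_le_n) (by linarith)
    (domain_subset hx) (domain_subset hy) hxy

/-- For integers `a > b ≥ n ≥ 2`, `k(a,n) > k(b,n)`. -/
theorem stmt_5 (a b n : ℕ) (hab : a > b) (hbn : b ≥ n) (hn : n ≥ 2) :
    kfun a n > kfun b n := by
  have neg_one_lt (m : ℕ) : (-1 : ℝ) < m := by linarith [m.cast_nonneg (α := ℝ)]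
  exact stmt_5_general hn (neg_one_lt b) (neg_one_lt a) (Nat.cast_lt.mpr hab)
end

section
/- Let C = 1.25506 and E(n) = (n/log n)·(log 4 − C − (log 2 · log 4)/log(2n)) for integers n > 1, where log is the natural logarithm. Suppose n⋆ > 1 and r ≥ 0 are integers with E(n⋆) > r + 1. Then for all integers m ≥ n ≥ n⋆, the product P(m,n) = ∏_{i=1}^{n}(m+i) of n consecutive integers starting at m+1 is divisible by strictly more than r distinct primes, all of which are strictly greater than n. -/
/-- `E(n) = (n/log n)·(log 4 − C − log 2 · log 4 / log(2n))` with `C = 1.25506`. -/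
noncomputable def E (n : ℕ) : ℝ :=
  ((n : ℝ) / Real.log n) *
    (Real.log 4 - 1.25506 - Real.log 2 * Real.log 4 / Real.log (2 * (n : ℝ)))

/-- `P m n = ∏_{i=1}^n (m+i)`. -/
def P (m n : ℕ) : ℕ := ∏ i ∈ Finset.Icc 1 n, (m + i)

/-!
The product `P m n` is a multiple of `N.choose n`, where `N = m + n ≥ 2 * n`. Each prime power
exactly dividing `N.choose n` is at most `N`, and the primes in `(√N, n]` occur at most to the
first power. Hence a lower bound for `log (N.choose n)` forces many primes above `n`, once the
contribution of the primes up to `n` is bounded: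

* for `N ^ 2 ≥ n ^ 3`, it suffices to count the primes up to `n`;
* for smaller `N`, only the primes up to `√N` are counted, and the product of the remaining ones is
  at most `4 ^ n`;
* for `N ≤ 3 * n`, where `4 ^ n` is too large, no prime in `(N / 3, n]` other than those up to `√N`
  divides `N.choose n`, so `4 ^ n` improves to `4 ^ (N / 3)`.

For `n ≥ 1024` this yields at least `(2 / 15) * n / log n` primes, and `2 / 15 > log 4 - 1.25506`.
The sharp estimate `π n < 1.25506 * n / log n` is thereby avoided: bounding `π` by the count of
residues coprime to 30 is enough.
-/

section Factorization

open Finset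
open scoped Nat Nat.Prime

/-- The primes greater than `k` that divide `c`; the theorem counts them for `c = P m k`. -/
def largePrimeFactors (k c : ℕ) : Finset ℕ := {p ∈ c.primeFactors | k < p}

lemma largePrimeFactors_mono {k a b : ℕ} (hab : a ∣ b) (hb : b ≠ 0) :
    largePrimeFactors k a ⊆ largePrimeFactors k b :=
  filter_subset_filter _ (Nat.primeFactors_mono hab hb)

lemma P_ne_zero (m n : ℕ) : P m n ≠ 0 :=
  prod_ne_zero_iff.mpr fun i hi ↦ by grind

lemma P_eq_factorial_mul_choose (m n : ℕ) : P m n = n ! * (m + n).choose n := by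
  rw [← Nat.ascFactorial_eq_factorial_mul_choose, Nat.ascFactorial_eq_prod_range, P,
    ← Ico_add_one_right_eq_Icc, prod_Ico_eq_prod_range]
  simp only [Nat.add_sub_cancel, add_assoc]

lemma prod_largePrimeFactors_mul_prod_primesLE (k : ℕ) {c : ℕ} (hc : c ≠ 0) :
    (∏ p ∈ largePrimeFactors k c, p ^ c.factorization p) *
      ∏ p ∈ k.primesLE, p ^ c.factorization p = c := by
  have hsmall : ∏ p ∈ c.primeFactors with ¬k < p, p ^ c.factorization p =
      ∏ p ∈ k.primesLE, p ^ c.factorization p := by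
    refine prod_subset (fun p hp ↦ ?_) fun p hp hpc ↦ ?_
    · simp only [mem_filter, Nat.mem_primeFactors, not_lt] at hp
      exact Nat.mem_primesLE.mpr ⟨hp.2, hp.1.1⟩
    · obtain ⟨hpk, hprime⟩ := Nat.mem_primesLE.mp hp
      have hdvd : ¬p ∣ c := fun h ↦
        hpc (mem_filter.mpr ⟨Nat.mem_primeFactors.mpr ⟨hprime, h, hc⟩, not_lt.mpr hpk⟩)
      rw [Nat.factorization_eq_zero_of_not_dvd hdvd, pow_zero]
  rw [← hsmall, largePrimeFactors, prod_filter_mul_prod_filter_not]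
  exact Nat.prod_factorization_pow_eq_self hc

variable {N k : ℕ}

lemma prod_pow_factorization_choose_le_pow_card (hN : 0 < N) (S : Finset ℕ) :
    ∏ p ∈ S, p ^ (N.choose k).factorization p ≤ N ^ #S :=
  prod_le_pow_card S _ N fun _ _ ↦ Nat.pow_factorization_choose_le hN

lemma choose_le_pow_card_mul_prod_primesLE (hN : 0 < N) (hk : k ≤ N) :
    N.choose k ≤ N ^ #(largePrimeFactors k (N.choose k)) *
      ∏ p ∈ k.primesLE, p ^ (N.choose k).factorization p := by
  conv_lhs => rw [← prod_largePrimeFactors_mul_prod_primesLE k (Nat.choose_pos hk).ne']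
  gcongr
  exact prod_pow_factorization_choose_le_pow_card hN _

lemma choose_le_pow_card_add_primeCounting (hN : 0 < N) (hk : k ≤ N) :
    N.choose k ≤ N ^ (#(largePrimeFactors k (N.choose k)) + π k) := by
  refine (choose_le_pow_card_mul_prod_primesLE hN hk).trans ?_
  rw [pow_add, ← Nat.primesLE_card_eq_primeCounting]
  gcongr
  exact prod_pow_factorization_choose_le_pow_card hN _

lemma prod_pow_factorization_choose_le_primorial {S : Finset ℕ} {B : ℕ}
    (hprime : ∀ p ∈ S, p.Prime) (hsqrt : ∀ p ∈ S, N < p ^ 2)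
    (hB : ∀ p ∈ S, B < p → (N.choose k).factorization p = 0) :
    ∏ p ∈ S, p ^ (N.choose k).factorization p ≤ primorial B := by
  calc ∏ p ∈ S, p ^ (N.choose k).factorization p
      = ∏ p ∈ S with p ≤ B, p ^ (N.choose k).factorization p := by
        refine (prod_filter_of_ne fun p hp hne ↦ ?_).symm
        by_contra! hBp
        exact hne (by rw [hB p hp hBp, pow_zero])
    _ ≤ ∏ p ∈ S with p ≤ B, p := by
        refine prod_le_prod' fun p hp ↦ ?_
        obtain ⟨hpS, -⟩ := mem_filter.mp hp
        exact (Nat.pow_le_pow_right (hprime p hpS).pos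
          (Nat.factorization_choose_le_one (hsqrt p hpS))).trans_eq (pow_one p)
    _ ≤ ∏ p ∈ B.primesLE, p := by
        refine prod_le_prod_of_subset_of_one_le' (fun p hp ↦ ?_) fun p hp _ ↦
          (Nat.prime_of_mem_primesLE hp).one_le
        obtain ⟨hpS, hpB⟩ := mem_filter.mp hp
        exact Nat.mem_primesLE.mpr ⟨hpB, hprime p hpS⟩
    _ = primorial B := (primorial_eq_prod_primesLE B).symm

lemma choose_le_pow_mul_four_pow {B : ℕ} (hN : 0 < N) (hk : k ≤ N)
    (hB : ∀ p ≤ k, N.sqrt < p → B < p → (N.choose k).factorization p = 0) :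
    N.choose k ≤ N ^ (#(largePrimeFactors k (N.choose k)) + π N.sqrt) * 4 ^ B := by
  refine (choose_le_pow_card_mul_prod_primesLE hN hk).trans ?_
  rw [pow_add, mul_assoc, ← prod_filter_mul_prod_filter_not k.primesLE (· ≤ N.sqrt)]
  gcongr
  · refine (prod_pow_factorization_choose_le_pow_card hN _).trans (Nat.pow_le_pow_right hN ?_)
    rw [← Nat.primesLE_card_eq_primeCounting]
    refine card_le_card fun p hp ↦ ?_
    obtain ⟨hpk, hpN⟩ := mem_filter.mp hp
    exact Nat.mem_primesLE.mpr ⟨hpN, Nat.prime_of_mem_primesLE hpk⟩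
  · refine (prod_pow_factorization_choose_le_primorial (fun p hp ↦ ?_) (fun p hp ↦ ?_)
      fun p hp ↦ ?_).trans (primorial_le_four_pow B)
    all_goals obtain ⟨hpk, hpN⟩ := mem_filter.mp hp
    · exact Nat.prime_of_mem_primesLE hpk
    · exact Nat.sqrt_lt'.mp (not_le.mp hpN)
    · exact hB p (Nat.le_of_mem_primesLE hpk) (not_le.mp hpN)

-- A prime `p` with `√N, N / 3 < p ≤ k ≤ N - k` divides `N !` as often as `k ! * (N - k) !`.
lemma choose_le_pow_mul_four_pow_div_three (hN : 4 ≤ N) (hk : 2 * k ≤ N) :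
    N.choose k ≤ N ^ (#(largePrimeFactors k (N.choose k)) + π N.sqrt) * 4 ^ (N / 3) := by
  refine choose_le_pow_mul_four_pow (by lia) (by lia) fun p hpk hsqrt hthird ↦ ?_
  have hp : p ≠ 2 := by
    have : 2 ≤ N.sqrt := Nat.le_sqrt'.mpr hN
    lia
  exact Nat.factorization_choose_of_lt_three_mul hp hpk (by lia) (by lia)

end Factorization

section BinomialLowerBound

open scoped Nat

lemma pow_mul_choose_le_pow_mul_choose {a b : ℕ} (hab : a ≤ b) (k : ℕ) :
    b ^ k * a.choose k ≤ a ^ k * b.choose k := by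
  have hdesc : b ^ k * a.descFactorial k ≤ a ^ k * b.descFactorial k := by
    have hpull (x y : ℕ) : x ^ k * y.descFactorial k = ∏ i ∈ Finset.range k, x * (y - i) := by
      rw [← Finset.pow_card_mul_prod, Finset.card_range, Nat.descFactorial_eq_prod_range]
    rw [hpull, hpull]
    refine Finset.prod_le_prod' fun i _ ↦ ?_
    rw [Nat.mul_sub, Nat.mul_sub, mul_comm b a]
    gcongr
  rw [Nat.descFactorial_eq_factorial_mul_choose, Nat.descFactorial_eq_factorial_mul_choose,
    mul_left_comm, mul_left_comm (a ^ k)] at hdesc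
  exact Nat.le_of_mul_le_mul_left hdesc k.factorial_pos

lemma two_mul_pow_le_mul_choose {N k : ℕ} (hk : 4 ≤ k) (hkN : 2 * k ≤ N) :
    (2 * N) ^ k ≤ k * k ^ k * N.choose k := by
  have hcentral : 4 ^ k ≤ k * (2 * k).choose k := by
    rw [← Nat.centralBinom_eq_two_mul_choose]
    exact (Nat.four_pow_lt_mul_centralBinom k hk).le
  refine le_of_mul_le_mul_left ?_ (show 0 < 2 ^ k by positivity)
  calc 2 ^ k * (2 * N) ^ k = N ^ k * 4 ^ k := by
        rw [← mul_pow, ← mul_pow]; ring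
    _ ≤ N ^ k * (k * (2 * k).choose k) := by gcongr
    _ = k * (N ^ k * (2 * k).choose k) := by ring
    _ ≤ k * ((2 * k) ^ k * N.choose k) := by
        gcongr k * ?_
        exact pow_mul_choose_le_pow_mul_choose hkN k
    _ = 2 ^ k * (k * k ^ k * N.choose k) := by ring

end BinomialLowerBound

section LogBounds

open Real

lemma log_le_mul_rpow {a b c x : ℝ} (ha : 0 < a) (hab : exp a⁻¹ ≤ b) (hc : log b ≤ c * b ^ a)
    (hx : b ≤ x) : log x ≤ c * x ^ a := by
  have hb : 0 < b := (exp_pos _).trans_le hab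
  have hx0 : 0 < x := hb.trans_le hx
  have hanti : log x / x ^ a ≤ log b / b ^ a :=
    log_div_self_rpow_antitoneOn ha hab (hab.trans hx) hx
  calc log x ≤ log b / b ^ a * x ^ a := (div_le_iff₀ (by positivity)).mp hanti
    _ ≤ c * x ^ a := by
      gcongr
      exact (div_le_iff₀ (by positivity)).mpr hc

lemma exp_four_lt_1024 : exp 4 < 1024 := by
  have hexp : exp 4 = exp 1 ^ 4 := by rw [← exp_nat_mul]; norm_num
  calc exp 4 = exp 1 ^ 4 := hexp
    _ < 3 ^ 4 := by gcongr; exact exp_one_lt_three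
    _ < 1024 := by norm_num

lemma log_1024_eq : log 1024 = 10 * log 2 := by
  rw [show (1024 : ℝ) = 2 ^ 10 by norm_num, log_pow]; norm_num

variable {x : ℝ}

-- The constants in the next three lemmas are `log 1024 / 1024 ^ a`, rounded up.
lemma log_le_mul_self (hx : 1024 ≤ x) : log x ≤ 0.00677 * x := by
  have h := log_le_mul_rpow (a := 1) (c := 0.00677) one_pos
    ((exp_le_exp.mpr (by norm_num)).trans exp_four_lt_1024.le) ?_ hx
  · rwa [rpow_one] at h
  · rw [rpow_one, log_1024_eq]
    linarith [log_two_lt_d9]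

lemma log_le_mul_sqrt (hx : 1024 ≤ x) : log x ≤ 0.2167 * √x := by
  rw [sqrt_eq_rpow]
  refine log_le_mul_rpow (by norm_num)
    ((exp_le_exp.mpr (by norm_num)).trans exp_four_lt_1024.le) ?_ hx
  have hroot : √(1024 : ℝ) = 32 :=
    (sqrt_eq_iff_mul_self_eq_of_pos (by norm_num)).mpr (by norm_num)
  rw [← sqrt_eq_rpow, hroot, log_1024_eq]
  linarith [log_two_lt_d9]

lemma log_le_mul_rpow_inv_four (hx : 1024 ≤ x) : log x ≤ 1.23 * x ^ (4⁻¹ : ℝ) := by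
  refine log_le_mul_rpow (by norm_num) ?_ ?_ hx
  · rw [inv_inv]; exact exp_four_lt_1024.le
  · have hroot : (5.65 : ℝ) ≤ 1024 ^ (4⁻¹ : ℝ) :=
      (le_rpow_inv_iff_of_pos (by norm_num) (by norm_num) (by norm_num)).mpr (by norm_num)
    rw [log_1024_eq]
    linarith [log_two_lt_d9]

lemma log_three_halves_gt : 0.405 < log (3 / 2) := by
  rw [log_div (by norm_num) (by norm_num)]
  linarith [log_two_lt_d9, log_three_gt_d9]

lemma log_three_halves_le_of_mem_Icc (hx : x ∈ Set.Icc 2 3) :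
    log (3 / 2) ≤ log (2 * x) - 2 / 3 * log 2 * x := by
  have hconcave : ConcaveOn ℝ (Set.Ioi 0) fun y : ℝ ↦ log y - 2 / 3 * log 2 * y :=
    strictConcaveOn_log_Ioi.concaveOn.sub
      ((LinearMap.mulLeft ℝ (2 / 3 * log 2)).convexOn (convex_Ioi 0))
  have hmin := hconcave.min_le_of_mem_Icc (by simp) (by simp) hx
  rw [log_mul two_ne_zero (by linarith [hx.1]), log_div (by norm_num) (by norm_num)]
  rcases min_le_iff.mp hmin with h | h <;> linarith [log_two_gt_d9, log_three_lt_d9]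

end LogBounds

section PrimeCounting

open scoped Nat.Prime

-- Sieving by 30: the density of the residues coprime to 30 is `φ 30 / 30 = 4 / 15`.
lemma primeCounting_le (n : ℕ) : (π n : ℝ) ≤ 4 / 15 * n + 10 := by
  have h30 : π 30 = 10 := by decide
  rcases le_total n 30 with hn | hn
  · have : (π n : ℝ) ≤ 10 := mod_cast (Nat.monotone_primeCounting hn).trans_eq h30
    linarith [n.cast_nonneg (α := ℝ)]
  · obtain ⟨j, rfl⟩ := Nat.exists_eq_add_of_le hn
    have hsieve := Nat.primeCounting_add_le (a := 30) (by norm_num) le_rfl j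
    rw [h30, show Nat.totient 30 = 8 by decide] at hsieve
    have : (15 * π (30 + j) : ℝ) ≤ 4 * (30 + j : ℕ) + 150 := mod_cast by lia
    linarith

end PrimeCounting

section ChooseLogBounds

open Finset Real
open scoped Nat.Prime

variable {N k : ℕ}

lemma mul_log_le_log_add_log_choose (hk : 4 ≤ k) (hkN : 2 * k ≤ N) :
    k * log (2 * (N / k)) ≤ log k + log (N.choose k) := by
  have hk0 : (0 : ℝ) < k := by positivity
  have hN0 : (0 : ℝ) < N := mod_cast (by lia : 0 < N)
  have hC : (0 : ℝ) < N.choose k := mod_cast Nat.choose_pos (by lia)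
  have hpow : (2 * (N / k) : ℝ) ^ k ≤ k * N.choose k := by
    rw [← mul_div_assoc, div_pow, div_le_iff₀ (by positivity), mul_right_comm]
    exact mod_cast two_mul_pow_le_mul_choose hk hkN
  calc k * log (2 * (N / k)) = log ((2 * (N / k) : ℝ) ^ k) := (log_pow _ _).symm
    _ ≤ log (k * N.choose k) := log_le_log (by positivity) hpow
    _ = log k + log (N.choose k) := log_mul hk0.ne' hC.ne'

lemma log_choose_le_primeCounting (hN : 0 < N) (hk : k ≤ N) :
    log (N.choose k) ≤ (#(largePrimeFactors k (N.choose k)) + π k) * log N := by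
  have hC : (0 : ℝ) < N.choose k := mod_cast Nat.choose_pos hk
  have hlog := log_le_log hC (Nat.cast_le.mpr (choose_le_pow_card_add_primeCounting hN hk))
  simpa only [Nat.cast_pow, log_pow, Nat.cast_add] using hlog

lemma log_choose_le_of_le_four_pow {B : ℕ} (hN : 0 < N) (hk : k ≤ N)
    (h : N.choose k ≤ N ^ (#(largePrimeFactors k (N.choose k)) + π N.sqrt) * 4 ^ B) :
    log (N.choose k) ≤
      (#(largePrimeFactors k (N.choose k)) + π N.sqrt) * log N + B * (2 * log 2) := by
  have hC : (0 : ℝ) < N.choose k := mod_cast Nat.choose_pos hk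
  have hlog := log_le_log hC (Nat.cast_le.mpr h)
  rw [Nat.cast_mul, log_mul (by positivity) (by positivity)] at hlog
  simpa only [Nat.cast_pow, log_pow, Nat.cast_add, Nat.cast_ofNat, log_four_eq] using hlog

lemma mul_log_half_le (hk : 4 ≤ k) (hkN : 2 * k ≤ N) :
    k * log (N / k / 2) ≤
      log k + (#(largePrimeFactors k (N.choose k)) + π N.sqrt) * log N := by
  have hlower := mul_log_le_log_add_log_choose hk hkN
  have hupper := log_choose_le_of_le_four_pow (by lia) (by lia) <|
    choose_le_pow_mul_four_pow (N := N) (k := k) (B := k) (by lia) (by lia) (by lia)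
  have hK : (N / k : ℝ) ≠ 0 :=
    div_ne_zero (mod_cast (by lia : N ≠ 0)) (mod_cast (by lia : k ≠ 0))
  rw [log_mul two_ne_zero hK] at hlower
  rw [log_div hK two_ne_zero]
  linarith

lemma mul_log_three_halves_le (hk : 4 ≤ k) (hkN : 2 * k ≤ N) :
    k * log (3 / 2) ≤
      log k + (#(largePrimeFactors k (N.choose k)) + π N.sqrt) * log N := by
  have hk0 : (0 : ℝ) < k := by positivity
  have hK2 : 2 ≤ (N / k : ℝ) := (le_div_iff₀ hk0).mpr (mod_cast hkN)
  rcases le_total (N / k : ℝ) 3 with hK3 | hK3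
  · have hlower := mul_log_le_log_add_log_choose hk hkN
    have hupper := log_choose_le_of_le_four_pow (by lia) (by lia) <|
      choose_le_pow_mul_four_pow_div_three (by lia) hkN
    have hthird : ((N / 3 : ℕ) : ℝ) * (2 * log 2) ≤ N / 3 * (2 * log 2) := by
      gcongr
      exact Nat.cast_div_le
    calc k * log (3 / 2) ≤ k * (log (2 * (N / k)) - 2 / 3 * log 2 * (N / k)) := by
          gcongr
          exact log_three_halves_le_of_mem_Icc ⟨hK2, hK3⟩
      _ = k * log (2 * (N / k)) - N / 3 * (2 * log 2) := by field_simp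
      _ ≤ _ := by linarith
  · refine le_trans ?_ (mul_log_half_le hk hkN)
    gcongr

lemma mul_two_mul_log_three_halves_le (hk : 4 ≤ k) (hkN : 9 / 2 * (k : ℝ) ≤ N) :
    k * (2 * log (3 / 2)) ≤
      log k + (#(largePrimeFactors k (N.choose k)) + π N.sqrt) * log N := by
  have hk0 : (0 : ℝ) < k := by positivity
  have hkN2 : 2 * k ≤ N := by
    have : (2 * k : ℝ) ≤ N := by linarith
    exact_mod_cast this
  have hK : 9 / 2 ≤ (N / k : ℝ) := (le_div_iff₀ hk0).mpr hkN
  calc k * (2 * log (3 / 2)) = k * log (9 / 2 / 2) := by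
        rw [show (9 / 2 / 2 : ℝ) = (3 / 2) ^ 2 by norm_num, log_pow, Nat.cast_ofNat]
    _ ≤ k * log (N / k / 2) := by gcongr
    _ ≤ _ := mul_log_half_le hk hkN2

end ChooseLogBounds

section LargePrimeCount

open Finset Real
open scoped Nat.Prime

lemma mul_div_log_le_of_gain {k N s h ρ κ : ℝ} (hk : 1024 ≤ k) (hs : 0 ≤ s)
    (hρ : 0 < ρ) (hNρ : log N ≤ ρ * log k) (hNκ : √N * log k ≤ κ * k)
    (hgain : k * h ≤ log k + (s + (4 / 15 * √N + 10)) * log N)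
    (hh : ρ * (2 / 15 + 4 / 15 * κ) + (10 * ρ + 1) * 0.00677 ≤ h) :
    2 / 15 * (k / log k) ≤ s := by
  have hlog : 0 < log k := log_pos (by linarith)
  rw [← mul_div_assoc, div_le_iff₀ hlog]
  by_contra! hlt
  refine hgain.not_gt ?_
  calc log k + (s + (4 / 15 * √N + 10)) * log N
      ≤ log k + (s + (4 / 15 * √N + 10)) * (ρ * log k) := by gcongr
    _ = ρ * (s * log k) + 4 / 15 * ρ * (√N * log k) + (10 * ρ + 1) * log k := by ring
    _ ≤ ρ * (s * log k) + 4 / 15 * ρ * (κ * k) + (10 * ρ + 1) * (0.00677 * k) := by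
        gcongr
        exact log_le_mul_self hk
    _ < ρ * (2 / 15 * k) + 4 / 15 * ρ * (κ * k) + (10 * ρ + 1) * (0.00677 * k) := by gcongr
    _ = k * (ρ * (2 / 15 + 4 / 15 * κ) + (10 * ρ + 1) * 0.00677) := by ring
    _ ≤ k * h := by gcongr

variable {N k : ℕ}

lemma primeCounting_sqrt_le (N : ℕ) : (π N.sqrt : ℝ) ≤ 4 / 15 * √N + 10 := by
  have := primeCounting_le N.sqrt
  have := nat_sqrt_le_real_sqrt (a := N)
  linarith

lemma mul_div_log_le_card_of_le_mul (hk : 1024 ≤ k) (hkN : 2 * k ≤ N)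
    (hNk : (N : ℝ) ≤ 9 / 2 * k) :
    2 / 15 * (k / log k) ≤ #(largePrimeFactors k (N.choose k)) := by
  have hk' : (1024 : ℝ) ≤ k := mod_cast hk
  have hN0 : (0 : ℝ) < N := mod_cast (by lia : 0 < N)
  have hlogk : 10 * log 2 ≤ log k := log_1024_eq ▸ log_le_log (by norm_num) hk'
  have hlogN : log N ≤ 1.22 * log k := by
    have h := log_le_log hN0 hNk
    rw [log_mul (by norm_num) (by positivity), show (9 / 2 : ℝ) = 3 ^ 2 / 2 by norm_num,
      log_div (by norm_num) two_ne_zero, log_pow, Nat.cast_ofNat] at h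
    linarith [log_two_gt_d9, log_three_lt_d9]
  have hsqrt : √N * log k ≤ 0.46 * k := by
    have hsqrtN : √N ≤ 2.122 * √k := by
      rw [sqrt_le_left (by positivity), mul_pow, sq_sqrt (by positivity)]
      linarith
    calc √N * log k ≤ 2.122 * √k * (0.2167 * √k) := by
          gcongr
          exact log_le_mul_sqrt hk'
      _ = 2.122 * 0.2167 * (√k * √k) := by ring
      _ ≤ 0.46 * k := by
          rw [mul_self_sqrt (by positivity)]
          gcongr
          norm_num
  refine mul_div_log_le_of_gain (h := 0.405) hk' (Nat.cast_nonneg _) (by norm_num) hlogN hsqrt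
    ?_ (by norm_num)
  calc (k : ℝ) * 0.405 ≤ k * log (3 / 2) := by gcongr; exact log_three_halves_gt.le
    _ ≤ log k + (#(largePrimeFactors k (N.choose k)) + π N.sqrt) * log N :=
        mul_log_three_halves_le (by lia) hkN
    _ ≤ _ := by
        gcongr
        exact primeCounting_sqrt_le N

lemma mul_div_log_le_card_of_sq_le_cube (hk : 1024 ≤ k) (hkN : 9 / 2 * (k : ℝ) ≤ N)
    (hNk : (N : ℝ) ^ 2 ≤ k ^ 3) :
    2 / 15 * (k / log k) ≤ #(largePrimeFactors k (N.choose k)) := by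
  have hk' : (1024 : ℝ) ≤ k := mod_cast hk
  have hk0 : (0 : ℝ) < k := by linarith
  have hN0 : (0 : ℝ) < N := by linarith
  have hlogN : log N ≤ 1.5 * log k := by
    have h := log_le_log (by positivity) hNk
    rw [log_pow, log_pow] at h
    push_cast at h
    linarith
  have hsqrt : √N * log k ≤ 1.23 * k := by
    have hsqrtN : √N ≤ (k : ℝ) ^ (3 / 4 : ℝ) := by
      refine le_of_pow_le_pow_left₀ four_ne_zero (by positivity) ?_
      calc √N ^ 4 = (√N ^ 2) ^ 2 := by ring
        _ = (N : ℝ) ^ 2 := by rw [sq_sqrt hN0.le]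
        _ ≤ (k : ℝ) ^ 3 := hNk
        _ = ((k : ℝ) ^ (3 / 4 : ℝ)) ^ 4 := by
            rw [← rpow_natCast (_ ^ _), ← rpow_mul hk0.le, ← rpow_natCast]
            norm_num
    calc √N * log k ≤ (k : ℝ) ^ (3 / 4 : ℝ) * (1.23 * (k : ℝ) ^ (4⁻¹ : ℝ)) := by
          gcongr
          exact log_le_mul_rpow_inv_four hk'
      _ = 1.23 * (k : ℝ) ^ (3 / 4 + 4⁻¹ : ℝ) := by rw [rpow_add hk0]; ring
      _ = 1.23 * k := by norm_num
  refine mul_div_log_le_of_gain (h := 2 * 0.405) hk' (Nat.cast_nonneg _) (by norm_num) hlogN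
    hsqrt ?_ (by norm_num)
  calc (k : ℝ) * (2 * 0.405) ≤ k * (2 * log (3 / 2)) := by
        gcongr; exact log_three_halves_gt.le
    _ ≤ log k + (#(largePrimeFactors k (N.choose k)) + π N.sqrt) * log N :=
        mul_two_mul_log_three_halves_le (by lia) hkN
    _ ≤ _ := by
        gcongr
        exact primeCounting_sqrt_le N

lemma mul_div_log_le_card_of_cube_le_sq (hk : 1024 ≤ k) (hkN : (k : ℝ) ^ 3 ≤ N ^ 2) :
    2 / 15 * (k / log k) ≤ #(largePrimeFactors k (N.choose k)) := by
  have hk' : (1024 : ℝ) ≤ k := mod_cast hk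
  have hk0 : (0 : ℝ) < k := by linarith
  have hkN2 : 2 * k ≤ N := by
    have hsq : (2 * k : ℝ) ^ 2 ≤ N ^ 2 := by nlinarith [sq_nonneg (k : ℝ)]
    exact_mod_cast le_of_sq_le_sq hsq (Nat.cast_nonneg N)
  have hN0 : (0 : ℝ) < N := mod_cast (by lia : 0 < N)
  have hlogk : 10 * log 2 ≤ log k := log_1024_eq ▸ log_le_log (by norm_num) hk'
  have hlogkN : 3 * log k ≤ 2 * log N := by
    have h := log_le_log (by positivity) hkN
    rw [log_pow, log_pow] at h
    exact_mod_cast h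
  have hlogN : 0 < log N := by linarith [log_two_gt_d9]
  have hbinom : k * log (2 * (N / k)) ≤
      log k + (#(largePrimeFactors k (N.choose k)) + π k) * log N :=
    (mul_log_le_log_add_log_choose (by lia) hkN2).trans <|
      add_le_add_right (log_choose_le_primeCounting (by lia) (by lia)) _
  have hthird : (k / 3 : ℝ) ≤ #(largePrimeFactors k (N.choose k)) + (4 / 15 * k + 10) := by
    refine le_of_mul_le_mul_right ?_ hlogN
    have hpi : (π k : ℝ) * log N ≤ (4 / 15 * k + 10) * log N := by
      gcongr
      exact primeCounting_le k
    have hlogk_le : log k ≤ k * log 2 := by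
      nlinarith [log_le_mul_self hk', log_two_gt_d9]
    have hmul : k * log k ≤ k * (2 / 3 * log N) := by gcongr; linarith
    rw [log_mul two_ne_zero (by positivity), log_div hN0.ne' hk0.ne'] at hbinom
    linarith
  calc 2 / 15 * (k / log k) ≤ 2 / 15 * (k / 6) := by
        gcongr
        linarith [log_two_gt_d9]
    _ ≤ _ := by linarith

theorem mul_div_log_le_card_largePrimeFactors_choose (hk : 1024 ≤ k) (hkN : 2 * k ≤ N) :
    2 / 15 * (k / log k) ≤ #(largePrimeFactors k (N.choose k)) := by
  rcases le_total (N : ℝ) (9 / 2 * k) with hsmall | hlarge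
  · exact mul_div_log_le_card_of_le_mul hk hkN hsmall
  rcases le_total ((N : ℝ) ^ 2) (k ^ 3) with hmedium | hhuge
  · exact mul_div_log_le_card_of_sq_le_cube hk hlarge hmedium
  · exact mul_div_log_le_card_of_cube_le_sq hk hhuge

end LargePrimeCount

section BoundsForE

open Real

lemma E_le_mul_div_log (n : ℕ) : E n ≤ 2 / 15 * (n / log n) := by
  have hlog2 : 0 ≤ log (2 * n) := mod_cast log_natCast_nonneg (2 * n)
  have hcorr : 0 ≤ log 2 * log 4 / log (2 * n) := by positivity
  rw [E, mul_comm (2 / 15 : ℝ)]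
  gcongr
  linarith [log_two_lt_d9, log_four_eq]

lemma E_le_one {n : ℕ} (hn : n ≠ 0) (hn' : n ≤ 1024) : E n ≤ 1 := by
  have hlt := log_two_lt_d9
  have hgt := log_two_gt_d9
  have hn0 : (0 : ℝ) < n := by positivity
  have hlog : 0 ≤ log n := log_natCast_nonneg n
  rw [E, log_mul two_ne_zero hn0.ne', log_four_eq]
  set t := log 2
  set d := t * (2 * t) / (t + log n) with hd
  have hd_mul : d * (t + log n) = t * (2 * t) := by rw [hd]; field_simp
  rcases le_or_gt (2 * t - 1.25506 - d) 0 with hneg | hpos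
  · exact (mul_nonpos_of_nonneg_of_nonpos (by positivity) hneg).trans zero_le_one
  · have hlog_le : log n ≤ 10 * t :=
      log_1024_eq ▸ log_le_log hn0 (mod_cast hn')
    have hd_ge : 2 * t / 11 ≤ d := by
      rw [hd, div_le_div_iff₀ (by norm_num) (by positivity)]
      nlinarith
    -- Positivity of the bracket bounds `log n` from below, hence `n / log n` from above.
    have hlog_ge : 6.6 ≤ log n := by nlinarith
    calc n / log n * (2 * t - 1.25506 - d) ≤ 1024 / 6.6 * 0.0054 := by
          gcongr
          · exact_mod_cast hn'
          · linarith
      _ ≤ 1 := by norm_num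

lemma div_log_le_div_log {x y : ℝ} (hx : exp 1 ≤ x) (hxy : x ≤ y) :
    x / log x ≤ y / log y := by
  have hx1 : 1 < x := (one_lt_exp_iff.mpr one_pos).trans_le hx
  have hlogx : 0 < log x := log_pos hx1
  have hlogy : 0 < log y := log_pos (hx1.trans_le hxy)
  have hanti : log y / y ≤ log x / x := log_div_self_antitoneOn hx (hx.trans hxy) hxy
  rw [div_le_div_iff₀ (by linarith) (by linarith)] at hanti
  rw [div_le_div_iff₀ hlogx hlogy]
  linarith

end BoundsForE

/-- If `n⋆ > 1` and `r ≥ 0` are integers with `E(n⋆) > r + 1`, then for all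
`m ≥ n ≥ n⋆`, `P(m,n)` is divisible by strictly more than `r` distinct primes,
all strictly greater than `n`. -/
theorem stmt_10 (nstar r : ℕ) (hstar : nstar > 1) (hE : E nstar > (r : ℝ) + 1) :
    ∀ m n : ℕ, m ≥ n → n ≥ nstar →
      ((P m n).primeFactors.filter (fun p => n < p)).card > r := by
  intro m n hmn hn
  have hlarge : 1024 < nstar := by
    by_contra! hle
    linarith [E_le_one (by lia) hle, r.cast_nonneg (α := ℝ)]
  have hexp : Real.exp 1 ≤ nstar :=
    Real.exp_one_lt_three.le.trans (mod_cast (by lia : 3 ≤ nstar))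
  have hchoose : r < (largePrimeFactors n ((m + n).choose n)).card := by
    rw [← Nat.cast_lt (α := ℝ)]
    calc (r : ℝ) < E nstar := by linarith
      _ ≤ 2 / 15 * (nstar / Real.log nstar) := E_le_mul_div_log nstar
      _ ≤ 2 / 15 * (n / Real.log n) := by
          gcongr 2 / 15 * ?_
          exact div_log_le_div_log hexp (mod_cast hn)
      _ ≤ _ := mul_div_log_le_card_largePrimeFactors_choose (by lia) (by lia)
  have hdvd : (m + n).choose n ∣ P m n :=
    P_eq_factorial_mul_choose m n ▸ dvd_mul_left _ _
  exact hchoose.trans_le (Finset.card_le_card (largePrimeFactors_mono hdvd (P_ne_zero m n)))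
end

section
/- Let C = 1.25506 and let log denote the natural logarithm. For every integer n ≥ 1100, the number of primes p with n < p < 2n is at least ⌊(n/log n)·(log 4 − C − (log 2 · log 4)/log(2n))⌋. -/
/-!
Erdős's argument. In the central binomial coefficient `(2n choose n) ≥ 4 ^ n / (2n)`, the primes up
to `2n / 3` contribute at most `(2n) ^ √(2n) * 4 ^ (2n / 3)`, the primes in `(2n / 3, n]` contribute
nothing, and each prime in `(n, 2n)` contributes at most `2n`. Hence there are at least
`(log 4 / 3) * n / log (2n) - √(2n) - 1` primes in `(n, 2n)`.

The claimed bound equals `log 4 * n / log (2n) - C * n / log n`. It is nonpositive up to `n = 722`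
and lies below Erdős's bound from there on: as `C` exceeds `(2 / 3) * log 4`, the difference of the
main terms is of order `n / log n`, which outweighs `√(2n)`.
-/

open Finset Real

theorem prod_primesLE_pow_factorization_choose_le {N : ℕ} (hN : 0 < N) (k m : ℕ) :
    ∏ p ∈ Nat.primesLE m, p ^ (N.choose k).factorization p ≤ N ^ N.sqrt * primorial m := by
  have factor_le : ∀ p ∈ Nat.primesLE m,
      p ^ (N.choose k).factorization p ≤ (if p ≤ N.sqrt then N else 1) * p := by
    intro p hp
    have p_pos : 0 < p := (Nat.prime_of_mem_primesLE hp).pos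
    split_ifs with hpN
    · exact Nat.pow_factorization_choose_le hN |>.trans (Nat.le_mul_of_pos_right N p_pos)
    · have hv : (N.choose k).factorization p ≤ 1 :=
        Nat.factorization_choose_le_one (Nat.sqrt_lt'.mp (not_le.mp hpN))
      simpa using Nat.pow_le_pow_right p_pos hv
  have card_le : #{p ∈ Nat.primesLE m | p ≤ N.sqrt} ≤ N.sqrt := by
    calc #{p ∈ Nat.primesLE m | p ≤ N.sqrt}
        ≤ #(Icc 1 N.sqrt) := card_le_card fun p hp ↦ by
          obtain ⟨hpm, hpN⟩ := mem_filter.mp hp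
          exact mem_Icc.mpr ⟨(Nat.prime_of_mem_primesLE hpm).pos, hpN⟩
      _ = N.sqrt := by simp
  calc ∏ p ∈ Nat.primesLE m, p ^ (N.choose k).factorization p
      ≤ ∏ p ∈ Nat.primesLE m, (if p ≤ N.sqrt then N else 1) * p := prod_le_prod' factor_le
    _ = N ^ #{p ∈ Nat.primesLE m | p ≤ N.sqrt} * primorial m := by
      rw [prod_mul_distrib, prod_ite, prod_const, prod_const_one, mul_one,
        primorial_eq_prod_primesLE]
    _ ≤ N ^ N.sqrt * primorial m := by gcongr

theorem centralBinom_eq_prod_primesLE_mul_prod_Ioo {n : ℕ} (hn : 2 < n) :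
    n.centralBinom =
      (∏ p ∈ Nat.primesLE (2 * n / 3), p ^ n.centralBinom.factorization p) *
        ∏ p ∈ Ioo n (2 * n) with p.Prime, p ^ n.centralBinom.factorization p := by
  have disjoint : Disjoint (Nat.primesLE (2 * n / 3)) {p ∈ Ioo n (2 * n) | p.Prime} := by
    rw [disjoint_left]
    intro p hp hp'
    have := Nat.le_of_mem_primesLE hp
    have := (mem_Ioo.mp (mem_filter.mp hp').1).1
    omega
  rw [← prod_union disjoint]
  conv_lhs => rw [← n.prod_pow_factorization_centralBinom]
  refine (prod_subset ?_ ?_).symm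
  · intro p hp
    simp only [mem_union, Nat.mem_primesLE, mem_filter, mem_Ioo, mem_range] at hp ⊢
    omega
  · intro p hp hp_notMem
    by_cases p_prime : p.Prime
    · have p_ne : p ≠ 2 * n := by
        rintro rfl
        exact Nat.not_prime_mul (by omega) (by omega) p_prime
      simp only [mem_union, Nat.mem_primesLE, mem_filter, mem_Ioo, mem_range, p_prime,
        and_true] at hp hp_notMem
      rw [Nat.factorization_centralBinom_of_two_mul_self_lt_three_mul hn (by omega) (by omega),
        pow_zero]
    · rw [Nat.factorization_eq_zero_of_not_prime _ p_prime, pow_zero]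

theorem centralBinom_le_pow_card_primes_Ioo {n : ℕ} (hn : 2 < n) :
    n.centralBinom ≤ (2 * n) ^ (2 * n).sqrt * 4 ^ (2 * n / 3) *
      (2 * n) ^ #{p ∈ Ioo n (2 * n) | p.Prime} := by
  have two_mul_pos : 0 < 2 * n := by omega
  rw [centralBinom_eq_prod_primesLE_mul_prod_Ioo hn]
  gcongr
  · grw [← primorial_le_four_pow (2 * n / 3)]
    exact prod_primesLE_pow_factorization_choose_le two_mul_pos n _
  · exact prod_le_pow_card _ _ _ fun p _ ↦ Nat.pow_factorization_choose_le two_mul_pos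

theorem le_card_primes_Ioo_two_mul {n : ℕ} (hn : 2 < n) :
    log 4 / 3 * (n / log (2 * n)) - √(2 * n) - 1 ≤ #{p ∈ Ioo n (2 * n) | p.Prime} := by
  set k := #{p ∈ Ioo n (2 * n) | p.Prime}
  have one_lt : (1 : ℝ) < 2 * n := by exact_mod_cast (by omega : 1 < 2 * n)
  have log_pos_two_mul : 0 < log (2 * n) := log_pos one_lt
  have four_pow_le : 4 ^ n ≤ (2 * n) ^ ((2 * n).sqrt + 1 + k) * 4 ^ (2 * n / 3) :=
    calc 4 ^ n ≤ 2 * n * n.centralBinom :=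
          Nat.four_pow_le_two_mul_self_mul_centralBinom n (by omega)
      _ ≤ 2 * n * ((2 * n) ^ (2 * n).sqrt * 4 ^ (2 * n / 3) * (2 * n) ^ k) := by
          gcongr; exact centralBinom_le_pow_card_primes_Ioo hn
      _ = (2 * n) ^ ((2 * n).sqrt + 1 + k) * 4 ^ (2 * n / 3) := by ring
  have log_four_pow_le :
      n * log 4 ≤ ((2 * n).sqrt + 1 + k) * log (2 * n) + (2 * n / 3 : ℕ) * log 4 := by
    have := log_le_log (by positivity) (Nat.cast_le (α := ℝ).mpr four_pow_le)
    push_cast at this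
    rwa [log_mul (by positivity) (by positivity), log_pow, log_pow, log_pow,
      Nat.cast_add, Nat.cast_add, Nat.cast_one] at this
  have sqrt_le : ((2 * n).sqrt : ℝ) ≤ √(2 * n) := by exact_mod_cast nat_sqrt_le_real_sqrt
  have div_le : ((2 * n / 3 : ℕ) : ℝ) ≤ 2 * n / 3 := by exact_mod_cast Nat.cast_div_le (α := ℝ)
  grw [sqrt_le, div_le] at log_four_pow_le
  have : log 4 / 3 * (n / log (2 * n)) ≤ √(2 * n) + 1 + k := by
    rw [← mul_div_assoc, div_le_iff₀ log_pos_two_mul]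
    linarith
  linarith

section RealEstimates

variable {x : ℝ}

theorem div_log_mul_eq_sub (hx : 1 < x) (c : ℝ) :
    x / log x * (log 4 - c - log 2 * log 4 / log (2 * x)) =
      log 4 * (x / log (2 * x)) - c * (x / log x) := by
  have log_two_mul : log (2 * x) = log 2 + log x := log_mul two_ne_zero (by positivity)
  have log_x_pos : 0 < log x := log_pos hx
  rw [log_two_mul]
  field_simp
  ring

theorem log_le_two_mul_log_add_sqrt_div {a : ℝ} (ha : 0 < a) (hx : 0 < x) :
    log x ≤ 2 * log a + 2 * (√x / a - 1) := by
  have tangent := log_le_sub_one_of_pos (div_pos (sqrt_pos.mpr hx) ha)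
  rw [log_div (sqrt_ne_zero'.mpr hx) ha.ne', log_sqrt hx.le] at tangent
  linarith

theorem log_le_add_sqrt_div (hx : 0 < x) : log x ≤ 6.31777 + √x / 32 := by
  have tangent := log_le_two_mul_log_add_sqrt_div (a := 2 ^ 6) (by norm_num) hx
  rw [log_pow] at tangent
  push_cast at tangent
  linarith [log_two_lt_d9]

theorem log_four_mul_div_log_le_of_le (hx : 1 < x) (hx' : x ≤ 722) :
    log 4 * (x / log (2 * x)) ≤ 1.25506 * (x / log x) := by
  have log_x_pos : 0 < log x := log_pos hx
  have log_two_mul : log (2 * x) = log 2 + log x := log_mul two_ne_zero (by positivity)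
  have log_x_le : 2 * log x ≤ 19 * log 2 := by
    have : log (x ^ 2) ≤ log (2 ^ 19) := log_le_log (by positivity) (by nlinarith)
    simpa only [log_pow, Nat.cast_ofNat] using this
  have log_mul_le : log 4 * log x ≤ 1.25506 * log (2 * x) := by
    rw [log_two_mul, log_four_eq]
    nlinarith [log_two_gt_d9, log_two_lt_d9]
  rw [← mul_div_assoc, ← mul_div_assoc, div_le_div_iff₀ (by rw [log_two_mul]; positivity) log_x_pos]
  calc log 4 * x * log x = x * (log 4 * log x) := by ring
    _ ≤ x * (1.25506 * log (2 * x)) := by gcongr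
    _ = 1.25506 * x * log (2 * x) := by ring

theorem sqrt_add_one_mul_log_le (hx : 722 ≤ x) :
    (√(2 * x) + 1) * log (2 * x) + 2 / 3 * log 4 * x ≤ 1.25506 * (x * log (2 * x) / log x) := by
  have log_x_pos : 0 < log x := log_pos (by linarith)
  have log_two_mul : log (2 * x) = log 2 + log x := log_mul two_ne_zero (by positivity)
  have log_two_gt := log_two_gt_d9
  have log_two_lt := log_two_lt_d9
  have le_sqrt : 38 ≤ √(2 * x) := le_sqrt_of_sq_le (by linarith)
  have sq_sqrt_eq : √(2 * x) ^ 2 = 2 * x := sq_sqrt (by positivity)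
  have log_two_mul_le : log (2 * x) ≤ 6.31777 + √(2 * x) / 32 :=
    log_le_add_sqrt_div (by positivity)
  set s := √(2 * x)
  set u := 5.62463 + s / 32 with hu
  have log_x_le : log x ≤ u := by linarith
  have u_pos : 0 < u := by positivity
  -- `0.33086 < 1.25506 - (2 / 3) * log 4` and `0.8699 < 1.25506 * log 2`; after multiplication by
  -- `u` this is a cubic inequality in `s`.
  have cubic : (s + 1) * (6.31777 + s / 32) ≤ x * (0.33086 + 0.8699 / u) := by
    rw [show x * (0.33086 + 0.8699 / u) = x * (0.33086 * u + 0.8699) / u by field_simp,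
      le_div_iff₀ u_pos, show x = s ^ 2 / 2 by linarith, hu]
    nlinarith [mul_nonneg (sub_nonneg.mpr le_sqrt) (sub_nonneg.mpr le_sqrt),
      pow_nonneg (sub_nonneg.mpr le_sqrt) 3]
  have div_u_le : 0.8699 / u ≤ 1.25506 * log 2 / log x := by
    gcongr
    linarith
  calc (s + 1) * log (2 * x) + 2 / 3 * log 4 * x
      ≤ (s + 1) * (6.31777 + s / 32) + 2 / 3 * log 4 * x := by gcongr
    _ ≤ x * (0.33086 + 0.8699 / u) + 2 / 3 * log 4 * x := by gcongr
    _ = x * (0.33086 + 4 / 3 * log 2 + 0.8699 / u) := by rw [log_four_eq]; ring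
    _ ≤ x * (1.25506 + 1.25506 * log 2 / log x) := by gcongr; linarith
    _ = 1.25506 * (x * log (2 * x) / log x) := by rw [log_two_mul]; field_simp; ring

theorem log_four_mul_div_log_sub_le (hx : 722 ≤ x) :
    log 4 * (x / log (2 * x)) - 1.25506 * (x / log x) ≤
      log 4 / 3 * (x / log (2 * x)) - √(2 * x) - 1 := by
  have log_two_mul_pos : 0 < log (2 * x) := log_pos (by linarith)
  have divided : √(2 * x) + 1 + 2 / 3 * log 4 * (x / log (2 * x)) ≤ 1.25506 * (x / log x) := by
    calc √(2 * x) + 1 + 2 / 3 * log 4 * (x / log (2 * x))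
        = ((√(2 * x) + 1) * log (2 * x) + 2 / 3 * log 4 * x) / log (2 * x) := by field_simp
      _ ≤ 1.25506 * (x * log (2 * x) / log x) / log (2 * x) := by
        gcongr; exact sqrt_add_one_mul_log_le hx
      _ = 1.25506 * (x / log x) := by
        rw [mul_div_assoc, div_right_comm, mul_div_cancel_right₀ _ log_two_mul_pos.ne']
  linarith

end RealEstimates

theorem stmt_14_general (n : ℕ) (hn : 2 ≤ n) :
    (n : ℝ) / log n * (log 4 - 1.25506 - log 2 * log 4 / log (2 * n)) ≤
      #{p ∈ Ioo n (2 * n) | p.Prime} := by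
  rw [div_log_mul_eq_sub (by exact_mod_cast hn)]
  rcases le_total (n : ℝ) 722 with n_le | le_n
  · calc log 4 * (n / log (2 * n)) - 1.25506 * (n / log n)
        ≤ 0 := sub_nonpos.mpr (log_four_mul_div_log_le_of_le (by exact_mod_cast hn) n_le)
      _ ≤ #{p ∈ Ioo n (2 * n) | p.Prime} := Nat.cast_nonneg _
  · have two_lt : 2 < n := by
      have : 722 ≤ n := by exact_mod_cast le_n
      omega
    exact (log_four_mul_div_log_sub_le le_n).trans (le_card_primes_Ioo_two_mul two_lt)

/-- For every integer `n ≥ 1100`, the number of primes in `(n, 2n)` is at least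
`⌊(n/log n)·(log 4 − C − log 2 · log 4 / log(2n))⌋`, with `C = 1.25506`. -/
theorem stmt_14 (n : ℕ) (hn : n ≥ 1100) :
    ⌊((n : ℝ) / Real.log n) *
        (Real.log 4 - 1.25506 - Real.log 2 * Real.log 4 / Real.log (2 * (n : ℝ)))⌋ ≤
      (((Finset.Ioo n (2 * n)).filter Nat.Prime).card : ℤ) := by
  exact_mod_cast (Int.floor_le _).trans (stmt_14_general n (by omega))
end

section
/- Let C = 1.25506, let log denote the natural logarithm, and let π(n) denote the number of primes ≤ n. For every real number θ with 0 < θ < log(4)/C − 1, there exists an integer n⋆ such that for every integer n ≥ n⋆, the number of primes p with n < p < 2n is at least ⌊θ · π(n)⌋. -/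
/-!
As in Erdős's proof of Bertrand's postulate, a prime factor of `Nat.centralBinom n` is at most
`2n/3` or lies in `(n, 2n)`, and only the primes up to `√(2n)` can occur to a power higher than the
first. Since `4 ^ n / n < Nat.centralBinom n` and the primes up to `2n/3` have product at most
`4 ^ (2n/3)`, the primes in `(n, 2n)` number at least `(log 4 / 3 - o(1)) n / log n`. Chebyshev's
upper bound `π n ≤ (log 4 + o(1)) n / log n` turns this into any proportion of `π n` below `1 / 3`,
whereas `log 4 / 1.25506 - 1` is only about `0.105`.
-/

section CentralBinom

open Finset Nat

theorem choose_le_pow_sqrt_mul_prod_primeFactors (n k : ℕ) :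
    n.choose k ≤ n ^ sqrt n * ∏ p ∈ (n.choose k).primeFactors, p := by
  rcases lt_or_ge n k with hnk | hkn
  · simp [choose_eq_zero_of_lt hnk]
  rcases n.eq_zero_or_pos with rfl | hn
  · simp [Nat.le_zero.1 hkn]
  set P := (n.choose k).primeFactors
  have factor_le : ∀ p ∈ P, p ^ (n.choose k).factorization p ≤
      (if p ≤ sqrt n then n else 1) * p := by
    intro p hp
    have hp_pos : 0 < p := pos_of_mem_primeFactors hp
    split_ifs with hps
    · exact (pow_factorization_choose_le hn).trans (Nat.le_mul_of_pos_right n hp_pos)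
    · have h_exp : (n.choose k).factorization p ≤ 1 :=
        factorization_choose_le_one (sqrt_lt'.1 (not_le.1 hps))
      simpa using Nat.pow_le_pow_right hp_pos h_exp
  have card_le : #{p ∈ P | p ≤ sqrt n} ≤ sqrt n := by
    have h_subset : {p ∈ P | p ≤ sqrt n} ⊆ Icc 1 (sqrt n) := fun p hp ↦
      mem_Icc.2 ⟨pos_of_mem_primeFactors (mem_filter.1 hp).1, (mem_filter.1 hp).2⟩
    simpa using card_le_card h_subset
  calc n.choose k = ∏ p ∈ P, p ^ (n.choose k).factorization p :=
        (prod_factorization_pow_eq_self (choose_ne_zero hkn)).symm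
    _ ≤ ∏ p ∈ P, (if p ≤ sqrt n then n else 1) * p := prod_le_prod' factor_le
    _ = n ^ #{p ∈ P | p ≤ sqrt n} * ∏ p ∈ P, p := by
        rw [prod_mul_distrib, ← prod_filter, prod_const]
    _ ≤ n ^ sqrt n * ∏ p ∈ P, p := by gcongr

theorem primeFactors_centralBinom_subset {n : ℕ} (hn : 2 < n) :
    (centralBinom n).primeFactors ⊆
      primesLE (2 * n / 3) ∪ {p ∈ Ioo n (2 * n) | p.Prime} := by
  intro p hp
  have hp_prime : p.Prime := prime_of_mem_primeFactors hp
  have h_exp : (centralBinom n).factorization p ≠ 0 :=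
    Finsupp.mem_support_iff.1 (by rwa [support_factorization])
  have hp_le : p ≤ 2 * n :=
    le_two_mul_of_factorization_centralBinom_pos (Nat.pos_of_ne_zero h_exp)
  have hp_ne : p ≠ 2 * n := by
    rintro rfl
    exact not_prime_mul (by norm_num) (by lia) hp_prime
  rcases lt_or_ge n p with hnp | hpn
  · exact mem_union_right _ (mem_filter.2 ⟨mem_Ioo.2 ⟨hnp, by lia⟩, hp_prime⟩)
  · have h_small : 3 * p ≤ 2 * n := by
      by_contra! h
      exact h_exp (factorization_centralBinom_of_two_mul_self_lt_three_mul hn hpn h)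
    exact mem_union_left _ (mem_primesLE.2 ⟨by lia, hp_prime⟩)

theorem prod_primeFactors_centralBinom_le {n : ℕ} (hn : 2 < n) :
    ∏ p ∈ (centralBinom n).primeFactors, p ≤
      4 ^ (2 * n / 3) * (2 * n) ^ #{p ∈ Ioo n (2 * n) | p.Prime} := by
  set D := {p ∈ Ioo n (2 * n) | p.Prime}
  have h_disjoint : Disjoint (primesLE (2 * n / 3)) D := by
    refine disjoint_left.2 fun p hp hpD ↦ ?_
    have h_le := (mem_primesLE.1 hp).1
    have h_gt := (mem_Ioo.1 (mem_filter.1 hpD).1).1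
    lia
  have h_pos : ∀ p ∈ primesLE (2 * n / 3) ∪ D, 1 ≤ p := by
    intro p hp
    rcases mem_union.1 hp with h | h
    exacts [(prime_of_mem_primesLE h).one_le, (mem_filter.1 h).2.one_le]
  calc ∏ p ∈ (centralBinom n).primeFactors, p
      ≤ ∏ p ∈ primesLE (2 * n / 3) ∪ D, p :=
        prod_le_prod_of_subset_of_one_le' (primeFactors_centralBinom_subset hn)
          fun p hp _ ↦ h_pos p hp
    _ = primorial (2 * n / 3) * ∏ p ∈ D, p := prod_union h_disjoint
    _ ≤ 4 ^ (2 * n / 3) * (2 * n) ^ #D :=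
        Nat.mul_le_mul (primorial_le_four_pow _) <|
          prod_le_pow_card _ _ _ fun p hp ↦ (mem_Ioo.1 (mem_filter.1 hp).1).2.le

theorem four_pow_le_mul_pow_card_primes_Ioo {n : ℕ} (hn : 4 ≤ n) :
    4 ^ n ≤ n * ((2 * n) ^ sqrt (2 * n) *
      (4 ^ (2 * n / 3) * (2 * n) ^ #{p ∈ Ioo n (2 * n) | p.Prime})) :=
  calc 4 ^ n ≤ n * centralBinom n := (four_pow_lt_mul_centralBinom n hn).le
    _ ≤ n * ((2 * n) ^ sqrt (2 * n) * ∏ p ∈ (centralBinom n).primeFactors, p) := by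
        gcongr
        exact choose_le_pow_sqrt_mul_prod_primeFactors (2 * n) n
    _ ≤ _ := by
        gcongr
        exact prod_primeFactors_centralBinom_le (by lia)

end CentralBinom

section Asymptotics

open Asymptotics Filter Finset Real

theorem log_four_div_three_mul_le_card_primes_Ioo {n : ℕ} (hn : 4 ≤ n) :
    log 4 / 3 * n ≤
      (1 + √(2 * n) + (#{p ∈ Ioo n (2 * n) | p.Prime} : ℝ)) * log (2 * n) := by
  have h_pow := four_pow_le_mul_pow_card_primes_Ioo hn
  set k := #{p ∈ Ioo n (2 * n) | p.Prime}
  have hn' : (4 : ℝ) ≤ n := mod_cast hn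
  have h_log : n * log 4 ≤
      log n + (Nat.sqrt (2 * n) * log (2 * n) + ((2 * n / 3 : ℕ) * log 4 + k * log (2 * n))) := by
    have h := log_le_log (by positivity) (Nat.cast_le (α := ℝ).2 h_pow)
    push_cast at h
    rwa [log_mul (by positivity) (by positivity), log_mul (by positivity) (by positivity),
      log_mul (by positivity) (by positivity), log_pow, log_pow, log_pow, log_pow] at h
  have h_log_nonneg : 0 ≤ log (2 * n : ℝ) := log_nonneg (by linarith)
  have h_log_le : log n ≤ log (2 * n : ℝ) := log_le_log (by positivity) (by linarith)
  have h_sqrt : (Nat.sqrt (2 * n) : ℝ) * log (2 * n) ≤ √(2 * n) * log (2 * n) := by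
    gcongr
    exact_mod_cast nat_sqrt_le_real_sqrt (a := 2 * n)
  have h_div : ((2 * n / 3 : ℕ) : ℝ) * log 4 ≤ 2 * n / 3 * log 4 := by
    gcongr
    exact_mod_cast Nat.cast_div_le (α := ℝ) (m := 2 * n) (n := 3)
  linarith

theorem isLittleO_one_add_sqrt_mul_log_id_atTop :
    (fun x : ℝ ↦ (1 + √x) * log x) =o[atTop] (id : ℝ → ℝ) := by
  have h_one : (fun _ : ℝ ↦ (1 : ℝ)) =O[atTop] (√· : ℝ → ℝ) :=
    (isLittleO_const_left.2 <| .inr <|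
      tendsto_abs_atTop_atTop.comp tendsto_sqrt_atTop).isBigO
  have h_log : log =o[atTop] (√· : ℝ → ℝ) := by
    simpa only [sqrt_eq_rpow] using isLittleO_log_rpow_atTop (r := 1 / 2) (by norm_num)
  refine ((h_one.add (isBigO_refl _ _)).mul_isLittleO h_log).congr' .rfl ?_
  filter_upwards [eventually_ge_atTop 0] with x hx using mul_self_sqrt hx

theorem tendsto_log_const_mul_div_log_atTop {a : ℝ} (ha : a ≠ 0) :
    Tendsto (fun x ↦ log (a * x) / log x) atTop (nhds 1) := by
  have h_lim : Tendsto (fun x ↦ log a / log x + 1) atTop (nhds 1) := by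
    simpa using (tendsto_log_atTop.const_div_atTop (log a)).add_const 1
  refine h_lim.congr' ?_
  filter_upwards [eventually_gt_atTop 1] with x hx
  rw [log_mul ha (by positivity), add_div, div_self (log_pos hx).ne']

theorem eventually_mul_div_log_le_card_primes_Ioo {c : ℝ} (hc : c < log 4 / 3) :
    ∀ᶠ n : ℕ in atTop, c * (n / log n) ≤ (#{p ∈ Ioo n (2 * n) | p.Prime} : ℝ) := by
  obtain ⟨d, hcd, hd⟩ := exists_between hc
  have h_two_mul : Tendsto (fun n : ℕ ↦ (2 * n : ℝ)) atTop atTop :=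
    tendsto_natCast_atTop_atTop.const_mul_atTop two_pos
  have h_error : ∀ᶠ n : ℕ in atTop,
      (1 + √(2 * n)) * log (2 * n) ≤ (log 4 / 3 - d) / 2 * (2 * n) := by
    have h_bound := h_two_mul.eventually <|
      isLittleO_one_add_sqrt_mul_log_id_atTop.bound (half_pos (sub_pos.2 hd))
    filter_upwards [h_bound] with n hn
    simpa only [id, norm_of_nonneg (by positivity : (0 : ℝ) ≤ 2 * n)] using
      (le_norm_self _).trans hn
  have h_ratio : ∀ᶠ n : ℕ in atTop, c * (log (2 * n) / log n) < d :=
    (((tendsto_log_const_mul_div_log_atTop two_ne_zero).const_mul c).comp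
      tendsto_natCast_atTop_atTop).eventually_lt_const (by simpa using hcd)
  filter_upwards [h_error, h_ratio, eventually_ge_atTop 4] with n h_error h_ratio hn
  have h_main := log_four_div_three_mul_le_card_primes_Ioo hn
  have h_log_pos : 0 < log (2 * n : ℝ) := log_pos (by norm_cast; lia)
  refine le_of_mul_le_mul_right ?_ h_log_pos
  calc c * (n / log n) * log (2 * n) = c * (log (2 * n) / log n) * n := by ring
    _ ≤ d * n := by gcongr
    _ ≤ _ := by linarith

theorem stmt_17_general {θ : ℝ} (hθ : θ < 1 / 3) :
    ∀ᶠ n : ℕ in atTop,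
      θ * (Nat.primeCounting n : ℝ) ≤ (#{p ∈ Ioo n (2 * n) | p.Prime} : ℝ) := by
  rcases le_or_gt θ 0 with hθ_nonpos | hθ_pos
  · exact .of_forall fun n ↦
      (mul_nonpos_of_nonpos_of_nonneg hθ_nonpos (Nat.cast_nonneg _)).trans (Nat.cast_nonneg _)
  have h_log_four : 0 < log 4 := log_pos (by norm_num)
  obtain ⟨ε, hε, hθε⟩ : ∃ ε > 0, θ * (log 4 + ε) < log 4 / 3 :=
    ⟨(1 / 3 - θ) * log 4, mul_pos (sub_pos.2 hθ) h_log_four, by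
      have h_gap : 0 < (1 / 3 - θ) * (1 - θ) := mul_pos (by linarith) (by linarith)
      linarith [mul_pos h_gap h_log_four]⟩
  have h_chebyshev : ∀ᶠ n : ℕ in atTop,
      (Nat.primeCounting n : ℝ) ≤ (log 4 + ε) * n / log n := by
    simpa only [Nat.floor_natCast] using
      tendsto_natCast_atTop_atTop.eventually (Chebyshev.eventually_primeCounting_le hε)
  filter_upwards [h_chebyshev, eventually_mul_div_log_le_card_primes_Ioo hθε] with n h_upper h_lower
  calc θ * (Nat.primeCounting n : ℝ) ≤ θ * ((log 4 + ε) * n / log n) := by gcongr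
    _ = θ * (log 4 + ε) * (n / log n) := by ring
    _ ≤ _ := h_lower

theorem log_four_div_sub_one_lt_one_third : log 4 / 1.25506 - 1 < 1 / 3 := by
  have h_log_four : log 4 = 2 * log 2 := by
    rw [show (4 : ℝ) = 2 ^ 2 by norm_num, log_pow, Nat.cast_ofNat]
  rw [sub_lt_iff_lt_add, div_lt_iff₀ (by norm_num)]
  linarith [log_two_lt_d9]

end Asymptotics

/-- For every real `θ` with `0 < θ < log 4 / C − 1` (with `C = 1.25506`),
there exists `n⋆` such that for all `n ≥ n⋆`, the number of primes in
`(n, 2n)` is at least `⌊θ · π(n)⌋`. -/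
theorem stmt_17 (θ : ℝ) (hθ0 : 0 < θ) (hθ : θ < Real.log 4 / 1.25506 - 1) :
    ∃ nstar : ℕ, ∀ n : ℕ, n ≥ nstar →
      ⌊θ * (Nat.primeCounting n : ℝ)⌋ ≤
        (((Finset.Ioo n (2 * n)).filter Nat.Prime).card : ℤ) :=
  Filter.eventually_atTop.1 <|
    (stmt_17_general (hθ.trans log_four_div_sub_one_lt_one_third)).mono fun _ h ↦
      (Int.floor_mono h).trans_eq (Int.floor_natCast _)
end
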